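/- Let m ≥ n ≥ 0 and let w be a word with m letters 𝗇 and n letters 𝖾, with partition λ = λ(w), sequence b(λ) = (b_1,…,b_n), and z := #{ i : b_i ≤ 0 }. Then there exist c_0,…,c_n ∈ ℂ(q) such that in the path algebra 𝒫 one has w = Σ_{r=0}^{n} c_r·(𝖾𝗇)^r(𝗇𝖾)^{n−r}𝗇^{m−n}, and for every r the element (−1)^{r+z}·c_r is a Laurent polynomial in q with nonnegative integer coefficients. -/

import Mathlib

noncomputable section

/-- The base field `F = ℂ(q)`. -/
abbrev F : Type := RatFunc ℂ

/-- The indeterminate `q`. -/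
def qq : F := RatFunc.X

/-- The `q`-integer `[j]_q = 1 + q + ⋯ + q^(j-1)`. -/
def qint (j : ℕ) : F := ∑ i ∈ Finset.range j, qq ^ i

/-- The `q`-factorial `[j]_q! = [1]_q ⋯ [j]_q`. -/
def qfact (j : ℕ) : F := ∏ i ∈ Finset.range j, qint (i + 1)

/-- Modular relations defining the path algebra `𝒫`; the letter `true` is `𝗇`,
the letter `false` is `𝖾`. -/
inductive PathRel : FreeAlgebra F Bool → FreeAlgebra F Bool → Prop where
  | mod1 : PathRel
      ((1 + qq) • (FreeAlgebra.ι F false * FreeAlgebra.ι F true * FreeAlgebra.ι F false))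
      (qq • (FreeAlgebra.ι F false * FreeAlgebra.ι F false * FreeAlgebra.ι F true) +
        FreeAlgebra.ι F true * FreeAlgebra.ι F false * FreeAlgebra.ι F false)
  | mod2 : PathRel
      ((1 + qq) • (FreeAlgebra.ι F true * FreeAlgebra.ι F false * FreeAlgebra.ι F true))
      (qq • (FreeAlgebra.ι F false * FreeAlgebra.ι F true * FreeAlgebra.ι F true) +
        FreeAlgebra.ι F true * FreeAlgebra.ι F true * FreeAlgebra.ι F false)

/-- The path algebra `𝒫`. -/
abbrev PathAlg : Type := RingQuot PathRel

/-- The generator `𝗇` of `𝒫`. -/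
def Pn : PathAlg := RingQuot.mkAlgHom F PathRel (FreeAlgebra.ι F true)

/-- The generator `𝖾` of `𝒫`. -/
def Pe : PathAlg := RingQuot.mkAlgHom F PathRel (FreeAlgebra.ι F false)

/-- The element of `𝒫` determined by a word in `𝗇` (`true`) and `𝖾` (`false`). -/
def wordElem (w : List Bool) : PathAlg := (w.map fun b => if b then Pn else Pe).prod

/-- `𝒫_{m,n}`: the span of words with `m` letters `𝗇` and `n` letters `𝖾`. -/
def Pmn (m n : ℕ) : Submodule F PathAlg :=
  Submodule.span F {x | ∃ w : List Bool, w.count true = m ∧ w.count false = n ∧ x = wordElem w}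

/-- `lam` (0-indexed list of parts) is a partition contained in the `m × n` box. -/
def IsPartitionIn (m n : ℕ) (lam : ℕ → ℕ) : Prop :=
  (∀ i j, i ≤ j → lam j ≤ lam i) ∧ (∀ i, lam i ≤ n) ∧ (∀ i, m ≤ i → lam i = 0)

/-- `eastBefore w r` = number of east steps (`false`) preceding the `(r+1)`-st
north step (`true`) of `w`. -/
def eastBefore : List Bool → ℕ → ℕ
  | [], _ => 0
  | true :: _, 0 => 0
  | true :: w, r + 1 => eastBefore w r
  | false :: w, r => eastBefore w r + 1

/-- `northBefore w r` = number of north steps (`true`) preceding the `(r+1)`-st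
east step (`false`) of `w`. -/
def northBefore : List Bool → ℕ → ℕ
  | [], _ => 0
  | false :: _, 0 => 0
  | false :: w, r + 1 => northBefore w r
  | true :: w, r => northBefore w r + 1

/-- The partition `λ(w)` of a word with `m` letters `𝗇`, as a 0-indexed function:
row `i` (from the top) of the partition has `eastBefore w (m-1-i)` cells. -/
def wordLam (m : ℕ) (w : List Bool) : ℕ → ℕ :=
  fun i => if i < m then eastBefore w (m - 1 - i) else 0

/-- The word `w(λ)` of a partition `λ ⊆ m × n` (given as 0-indexed `lam : ℕ → ℕ`). -/
def wordOf (m n : ℕ) (lam : ℕ → ℕ) : List Bool :=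
  ((List.range m).flatMap fun k =>
    List.replicate (lam (m - 1 - k) - lam (m - k)) false ++ [true]) ++
    List.replicate (n - lam 0) false

/-- The rook in column `j` of the placement `ρ` lies inside the Ferrers board of `lam`. -/
def rookInside (m n : ℕ) (lam : ℕ → ℕ) (ρ : Fin n ↪ Fin m) (j : Fin n) : Prop :=
  (j : ℕ) < lam (ρ j)

/-- The cell in row `i` (0-indexed from the top) and column `j` (0-indexed from the left)
is unattacked for the maximal non-attacking rook placement `ρ` (with the Ferrers board of
`lam` drawn in the top-left corner of the `m × n` board). -/
def Unattacked (m n : ℕ) (lam : ℕ → ℕ) (ρ : Fin n ↪ Fin m) (i : Fin m) (j : Fin n) : Prop :=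
  ρ j ≠ i ∧ ¬ ((ρ j : ℕ) < (i : ℕ)) ∧
    (if (j : ℕ) < lam i then
      (∀ j' : Fin n, ρ j' = i → ¬ (j' < j)) ∧
      (∀ j' : Fin n, ρ j' = i → j < j' → (j' : ℕ) < lam i)
    else
      ∀ j' : Fin n, ρ j' = i → j' < j → (j' : ℕ) < lam i)

/-- `stat ρ` = number of unattacked cells. -/
def statRook (m n : ℕ) (lam : ℕ → ℕ) (ρ : Fin n ↪ Fin m) : ℕ :=
  Set.ncard {p : Fin m × Fin n | Unattacked m n lam ρ p.1 p.2}

/-- The `q`-hit number `H_k^{m,n}(λ)`. -/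
def qHit (m n : ℕ) (lam : ℕ → ℕ) (k : ℕ) : F :=
  ∑ ρ : Fin n ↪ Fin m,
    if Set.ncard {j : Fin n | rookInside m n lam ρ j} = k then qq ^ statRook m n lam ρ else 0

/-- A Dyck word of size `N`. -/
def IsDyck (N : ℕ) (w : List Bool) : Prop :=
  w.count true = N ∧ w.count false = N ∧
    ∀ p : ℕ, (w.take p).count false ≤ (w.take p).count true

/-- Adjacency of the Dyck graph `G(D)` of a Dyck word of size `N` on vertices `Fin N`
(0-indexed: vertex `a` is the vertex `a+1` of `{1,…,N}`). -/
def dyckAdj (N : ℕ) (w : List Bool) (a b : Fin N) : Prop :=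
  ((a : ℕ) < b ∧ (b : ℕ) < northBefore w a) ∨ ((b : ℕ) < a ∧ (a : ℕ) < northBefore w b)

/-- Proper colorings of the Dyck graph `G(w)` with `ν` colors. -/
def properColorings (N ν : ℕ) (w : List Bool) : Set (Fin N → Fin ν) :=
  {κ | ∀ a b : Fin N, dyckAdj N w a b → κ a ≠ κ b}

/-- Number of ascents of a coloring. -/
def ascColor (N ν : ℕ) (w : List Bool) (κ : Fin N → Fin ν) : ℕ :=
  Set.ncard {p : Fin N × Fin N | (p.1 : ℕ) < p.2 ∧ dyckAdj N w p.1 p.2 ∧ κ p.1 < κ p.2}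

open scoped Classical in
/-- The chromatic quasisymmetric polynomial `X_{G(w)}(x_1,…,x_ν; q)`. -/
def chromX (N ν : ℕ) (w : List Bool) : MvPolynomial (Fin ν) F :=
  ∑ κ : Fin N → Fin ν,
    if κ ∈ properColorings N ν w then
      MvPolynomial.C (qq ^ ascColor N ν w κ) * ∏ a : Fin N, MvPolynomial.X (κ a)
    else 0

/-- The staircase word `δ_k = 𝖾^{n-k}(𝗇𝖾)^k𝗇^{m-k}`. -/
def deltaWord (m n k : ℕ) : List Bool :=
  List.replicate (n - k) false ++ (List.replicate k [true, false]).flatten ++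
    List.replicate (m - k) true

/-- `m_w`: the largest `k` with `λ(w) ⊆ λ(δ_k)`, i.e. such that the path of `δ_k`
lies weakly below the path of `w`. -/
def mw (m n : ℕ) (w : List Bool) : ℕ :=
  Finset.sup ((Finset.range (min m n + 1)).filter fun k =>
    ∀ i ∈ Finset.range m, wordLam m w i ≤ wordLam m (deltaWord m n k) i) id

/-- The lattice paths of `w` and `d` share the unit step of `w` corresponding to
the letter at (0-indexed) position `p` of `w`. -/
def StepShared (w d : List Bool) (p : ℕ) : Prop :=
  ∃ p' : ℕ, p' < d.length ∧ d[p']? = w[p]? ∧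
    (d.take p').count true = (w.take p).count true ∧
    (d.take p').count false = (w.take p).count false

/-- `w` possesses a critical factor: a factor `𝗇^i𝖾` or `𝗇𝖾^i` with `i ≥ 2`, whose run of
repeated letters is maximal within `w`, and whose letters contain a unit step shared by
the lattice paths of `w` and of `δ_{m_w}`. -/
def HasCriticalFactor (m n : ℕ) (w : List Bool) : Prop :=
  ∃ (x y : List Bool) (i : ℕ), 2 ≤ i ∧
    ((w = x ++ (List.replicate i true ++ [false]) ++ y ∧ x.getLast? ≠ some true ∧
        ∃ p, x.length ≤ p ∧ p < x.length + i + 1 ∧ StepShared w (deltaWord m n (mw m n w)) p) ∨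
      (w = x ++ ([true] ++ List.replicate i false) ++ y ∧ y.head? ≠ some false ∧
        ∃ p, x.length ≤ p ∧ p < x.length + i + 1 ∧ StepShared w (deltaWord m n (mw m n w)) p))

/-- Evaluation of a (commutative) polynomial in two variables at the commuting elements
`s`, `t` of `𝒫`. -/
def evalST (s t : PathAlg) (P : MvPolynomial (Fin 2) F) : PathAlg :=
  ∑ d ∈ P.support, P.coeff d • (s ^ (d 0) * t ^ (d 1))

/-- The conjugate partition: `conjP m lam i = λ'_i = #{rows r : λ_r ≥ i}` (here `i ≥ 1`,
rows 0-indexed, `lam` supported on `[0, m)`). -/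
def conjP (m : ℕ) (lam : ℕ → ℕ) (i : ℕ) : ℕ :=
  ((Finset.range m).filter fun r => i ≤ lam r).card

/-- The sequence `b(λ) = (b_1,…,b_n)` (1-indexed `i`) for `λ ⊆ m × n`, `m ≥ n`. -/
def bSeq (m : ℕ) (lam : ℕ → ℕ) (i : ℕ) : ℤ :=
  if lam (m - i) < i then (m : ℤ) + 1 - i - conjP m lam i else (i : ℤ) - lam (m - i)

/-- The element `wt_i ∈ 𝒫`. -/
def wt (i : ℤ) : PathAlg :=
  if 1 ≤ i then qint i.toNat • (Pn * Pe) - (qq * qint (i - 1).toNat) • (Pe * Pn)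
  else (qq ^ i) • (qint (1 - i).toNat • (Pe * Pn) - qint (-i).toNat • (Pn * Pe))

/-- The defining relations of the `q`-Klyachko algebra. -/
def klyRels : Set (MvPolynomial ℤ F) :=
  {x | ∃ i : ℤ, x = MvPolynomial.C (1 + qq) * (MvPolynomial.X i * MvPolynomial.X i) -
    (MvPolynomial.C qq * (MvPolynomial.X i * MvPolynomial.X (i - 1)) +
      MvPolynomial.X i * MvPolynomial.X (i + 1))}

/-- The `q`-Klyachko algebra `𝒦`. -/
abbrev Kly : Type := MvPolynomial ℤ F ⧸ Ideal.span klyRels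

/-- The generator `u_i` of `𝒦`. -/
def uK (i : ℤ) : Kly := Ideal.Quotient.mk (Ideal.span klyRels) (MvPolynomial.X i)

/-- The element `u(λ) = u_{a_1} ⋯ u_{a_m}` of `𝒦`, where `a(λ)` is the area sequence
of `λ ⊆ m × m` (here `a_{i+1} = (i+1) - λ_{m-i}` with `lam` 0-indexed). -/
def uLam (m : ℕ) (lam : ℕ → ℕ) : Kly :=
  ∏ i ∈ Finset.range m, uK ((i : ℤ) + 1 - lam (m - 1 - i))

/-- The partition `λ(G(D))` of a Dyck word of size `N`, 0-indexed:
`λ_{i+1} = N - h_{i+1}(D)`. -/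
def lamG (N : ℕ) (D : List Bool) : ℕ → ℕ :=
  fun i => if i < N then N - northBefore D i else 0

/-- The number of nonzero parts of `λ(G(D))`. -/
def ellG (N : ℕ) (D : List Bool) : ℕ :=
  ((Finset.range N).filter fun i => N - northBefore D i ≠ 0).card

/-- The Dyck graph `G(D)` is abelian. -/
def IsAbelian (N : ℕ) (D : List Bool) : Prop := lamG N D 0 + ellG N D ≤ N

/-- `r` is an acyclic orientation of the graph with adjacency `adj` on `Fin N`. -/
def IsAcyclicOrientation (N : ℕ) (adj : Fin N → Fin N → Prop)
    (r : Fin N → Fin N → Bool) : Prop :=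
  (∀ a b, r a b = true → adj a b) ∧
  (∀ a b, adj a b → (r a b = true ↔ ¬ r b a = true)) ∧
  (∀ a, ¬ Relation.TransGen (fun u v => r u v = true) a a)

/-- Number of ascents of an orientation. -/
def ascOrient (N : ℕ) (r : Fin N → Fin N → Bool) : ℕ :=
  Set.ncard {p : Fin N × Fin N | r p.1 p.2 = true ∧ (p.1 : ℕ) < p.2}

/-- Remove from `S` the sources of the orientation restricted to `S`. -/
def peel (N : ℕ) (r : Fin N → Fin N → Bool) (S : Set (Fin N)) : Set (Fin N) :=
  {v ∈ S | ∃ u ∈ S, r u v = true}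

/-- Number of sources of the orientation restricted to `S`. -/
def numSources (N : ℕ) (r : Fin N → Fin N → Bool) (S : Set (Fin N)) : ℕ :=
  Set.ncard {v ∈ S | ∀ u ∈ S, ¬ r u v = true}

open scoped Classical in
/-- `initial(A)`: the number of leading entries of the source sequence equal to `2`. -/
def initialA (N : ℕ) (r : Fin N → Fin N → Bool) : ℕ :=
  Finset.sup ((Finset.range (N + 1)).filter fun j =>
    ∀ k < j, numSources N r ((peel N r)^[k] Set.univ) = 2) id

end

noncomputable section PathProof

lemma qq_ne_zero : qq ≠ 0 := RatFunc.X_ne_zero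

lemma qint_rec (k : ℕ) : qint (k + 2) = (1 + qq) * qint (k + 1) - qq * qint k := by
  unfold qint
  rw [Finset.sum_range_succ, Finset.sum_range_succ]
  ring

variable {P : Type} [Ring P] [Algebra F P]

/-- The defining relations, for two elements of an arbitrary algebra. -/
structure Rels (n e : P) : Prop where
  rel1 : (1 + qq) • (e * n * e) = qq • (e * e * n) + n * e * e
  rel2 : (1 + qq) • (n * e * n) = qq • (e * n * n) + n * n * e

lemma comm_st {x y : P} (R : Rels x y) : Commute (y * x) (x * y) := by
  have h1 := congrArg (fun u => u * x) R.rel1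
  have h2 := congrArg (fun u => y * u) R.rel2
  simp only [add_mul, mul_add, smul_mul_assoc, mul_smul_comm, mul_assoc] at h1 h2
  rw [h1] at h2
  have := add_left_cancel h2
  unfold Commute SemiconjBy
  simp only [mul_assoc]
  exact this.symm

/-- The weight with index `d + 1`. -/
def Wp (x y : P) (d : ℕ) : P := qint (d + 1) • (x * y) - (qq * qint d) • (y * x)

/-- The weight with index `-k`. -/
def Wm (x y : P) (k : ℕ) : P :=
  (qq⁻¹ ^ k) • (qint (k + 1) • (y * x) - qint k • (x * y))

lemma n_t {x y : P} (R : Rels x y) : x * (x * y) = ((1 + qq) • (x * y) - qq • (y * x)) * x := by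
  rw [sub_mul, smul_mul_assoc, smul_mul_assoc, R.rel2]
  simp only [mul_assoc]
  abel

lemma e_s {x y : P} (R : Rels x y) : y * (y * x) = (qq⁻¹ • ((1 + qq) • (y * x) - x * y)) * y := by
  rw [smul_mul_assoc, sub_mul, smul_mul_assoc, R.rel1, add_sub_cancel_right, smul_smul,
    inv_mul_cancel₀ qq_ne_zero, one_smul, mul_assoc]

lemma n_Wp {x y : P} (R : Rels x y) (d : ℕ) : x * Wp x y d = Wp x y (d + 1) * x := by
  unfold Wp
  rw [mul_sub, mul_smul_comm, mul_smul_comm, n_t R, ← mul_assoc x y x, qint_rec]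
  simp only [sub_mul, smul_mul_assoc, smul_sub, smul_smul, sub_smul]
  rw [mul_comm (qint (d + 1)) (1 + qq), mul_comm (qint (d + 1)) qq]
  abel

lemma e_Wm {x y : P} (R : Rels x y) (k : ℕ) : y * Wm x y k = Wm x y (k + 1) * y := by
  unfold Wm
  rw [mul_smul_comm, mul_sub, mul_smul_comm, mul_smul_comm, e_s R, ← mul_assoc y x y, qint_rec]
  simp only [sub_mul, smul_mul_assoc, smul_sub, smul_smul, sub_smul]
  have h := qq_ne_zero
  rw [show qq⁻¹ ^ k * (qint (k + 1) * (qq⁻¹ * (1 + qq))) =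
      qq⁻¹ ^ (k + 1) * ((1 + qq) * qint (k + 1)) by ring,
    show qq⁻¹ ^ k * (qint (k + 1) * qq⁻¹) = qq⁻¹ ^ (k + 1) * qint (k + 1) by ring,
    show qq⁻¹ ^ (k + 1) * (qq * qint k) = qq⁻¹ ^ k * qint k by
      rw [pow_succ, mul_assoc, inv_mul_cancel_left₀ h]]
  abel

lemma npow_e {x y : P} (R : Rels x y) (d : ℕ) : x ^ (d + 1) * y = Wp x y d * x ^ d := by
  induction d with
  | zero => simp [Wp, qint]
  | succ d ih => rw [pow_succ', mul_assoc, ih, ← mul_assoc, n_Wp R, mul_assoc, ← pow_succ']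

lemma epow_n {x y : P} (R : Rels x y) (k : ℕ) : y ^ (k + 1) * x = Wm x y k * y ^ k := by
  induction k with
  | zero => simp [Wm, qint]
  | succ d ih => rw [pow_succ', mul_assoc, ih, ← mul_assoc, e_Wm R, mul_assoc, ← pow_succ']

/-- Laurent polynomials with nonnegative integer coefficients. -/
def LP (x : F) : Prop :=
  ∃ (a : ℤ) (p : Polynomial ℕ), x = qq ^ a * Polynomial.eval₂ (Nat.castRingHom F) qq p

lemma LP.mul {x y : F} (hx : LP x) (hy : LP y) : LP (x * y) := by
  obtain ⟨a, p, rfl⟩ := hx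
  obtain ⟨b, r, rfl⟩ := hy
  refine ⟨a + b, p * r, ?_⟩
  rw [Polynomial.eval₂_mul, zpow_add₀ qq_ne_zero]
  ring

lemma LP.add {x y : F} (hx : LP x) (hy : LP y) : LP (x + y) := by
  obtain ⟨a, p, rfl⟩ := hx
  obtain ⟨b, r, rfl⟩ := hy
  refine ⟨min a b, Polynomial.X ^ (a - min a b).toNat * p +
    Polynomial.X ^ (b - min a b).toNat * r, ?_⟩
  rw [Polynomial.eval₂_add, Polynomial.eval₂_mul, Polynomial.eval₂_mul, Polynomial.eval₂_X_pow,
    Polynomial.eval₂_X_pow, ← zpow_natCast, ← zpow_natCast,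
    Int.toNat_of_nonneg (by omega), Int.toNat_of_nonneg (by omega), mul_add, ← mul_assoc,
    ← mul_assoc, ← zpow_add₀ qq_ne_zero, ← zpow_add₀ qq_ne_zero]
  congr 4 <;> ring

lemma LP.zero : LP 0 := ⟨0, 0, by simp⟩
lemma LP.one : LP 1 := ⟨0, 1, by simp⟩
lemma LP.q : LP qq := ⟨1, 1, by simp⟩
lemma LP.qinv (k : ℕ) : LP (qq⁻¹ ^ k) := ⟨-k, 1, by simp⟩
lemma LP.qi (k : ℕ) : LP (qint k) := by
  refine ⟨0, ∑ i ∈ Finset.range k, Polynomial.X ^ i, ?_⟩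
  simp [Polynomial.eval₂_finsetSum, qint]

/-- Signed expansions in `s = en`, `t = ne`. -/
def Good (x y : P) (N z : ℕ) (f : P) : Prop :=
  ∃ c : ℕ → F, (f = ∑ r ∈ Finset.range (N + 1), c r • ((y * x) ^ r * (x * y) ^ (N - r))) ∧
    (∀ r, N < r → c r = 0) ∧ ∀ r, LP ((-1) ^ (r + z) * c r)

lemma Good.one {x y : P} : Good x y 0 0 1 := by
  refine ⟨fun r => if r = 0 then 1 else 0, by simp, fun r hr => by simp; omega, fun r => ?_⟩
  by_cases h : r = 0
  · simpa [h] using LP.one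
  · simpa [h] using LP.zero

lemma Good.mul {x y : P} (R : Rels x y) {N z : ℕ} {f : P} (h : Good x y N z f) {A B : F} (hA : LP A) (hB : LP B) :
    Good x y (N + 1) z (f * (A • (x * y) - B • (y * x))) := by
  obtain ⟨c, rfl, h0, hc⟩ := h
  refine ⟨fun r => A * c r - B * (if r = 0 then 0 else c (r - 1)), ?_, ?_, ?_⟩
  · simp only [sub_smul, Finset.sum_sub_distrib, mul_sub]
    congr 1
    · rw [Finset.sum_range_succ _ (N + 1), h0 (N + 1) (by omega), mul_zero, zero_smul, add_zero,
        Finset.sum_mul]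
      refine Finset.sum_congr rfl fun r hr => ?_
      have : r ≤ N := by simpa [Nat.lt_succ_iff] using hr
      rw [show N + 1 - r = (N - r) + 1 by omega, pow_succ (x * y), smul_mul_assoc,
        mul_smul_comm, smul_smul, mul_comm A, mul_assoc]
    · rw [Finset.sum_range_succ' _ (N + 1), Finset.sum_mul]
      simp only [if_true, mul_zero, zero_smul, add_zero]
      refine Finset.sum_congr rfl fun r hr => ?_
      have hcm : Commute (y * x) ((x * y) ^ (N - r)) := (comm_st R).pow_right _
      rw [if_neg (by omega), smul_mul_assoc, mul_smul_comm, smul_smul, mul_comm B, mul_assoc,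
        ← hcm.eq, ← mul_assoc, ← pow_succ, Nat.add_sub_cancel, Nat.add_sub_add_right]
  · intro r hr
    simp only []
    rw [h0 r (by omega), if_neg (by omega), h0 (r - 1) (by omega)]
    simp
  · intro r
    rcases r with _ | r
    · have := (hA.mul (hc 0))
      convert this using 1
      simp only [if_true]
      ring
    · have := (hA.mul (hc (r + 1))).add (hB.mul (hc r))
      convert this using 1
      simp only [Nat.add_sub_cancel, Nat.succ_ne_zero, if_false]
      ring

lemma Good.neg {x y : P} {N z : ℕ} {f : P} (h : Good x y N z f) : Good x y N (z + 1) (-f) := by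
  obtain ⟨c, rfl, h0, hc⟩ := h
  refine ⟨fun r => - c r, by simp, fun r hr => by simp [h0 r hr], fun r => ?_⟩
  convert hc r using 1
  ring

lemma Good.mulWp {x y : P} (R : Rels x y) {N z : ℕ} {f : P} (h : Good x y N z f) (d : ℕ) :
    Good x y (N + 1) z (f * Wp x y d) := Good.mul R h (LP.qi _) (LP.q.mul (LP.qi _))

lemma Good.mulWm {x y : P} (R : Rels x y) {N z : ℕ} {f : P} (h : Good x y N z f) (d : ℕ) :
    Good x y (N + 1) (z + 1) (f * Wm x y d) := by
  have := (Good.mul R h ((LP.qinv d).mul (LP.qi d)) ((LP.qinv d).mul (LP.qi (d + 1)))).neg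
  convert this using 1
  rw [← mul_neg]
  congr 1
  unfold Wm
  rw [neg_sub, smul_sub, smul_smul, smul_smul]

/-- The number of north steps from a negative height. -/
def zc (w : List Bool) : ℕ :=
  ((Finset.range (w.count true)).filter fun i => i < eastBefore w i).card

lemma eb_append_lt (w v : List Bool) (r : ℕ) (h : r < w.count true) :
    eastBefore (w ++ v) r = eastBefore w r := by
  induction w generalizing r with
  | nil => simp at h
  | cons b w ih =>
    cases b
    · simp only [List.cons_append, eastBefore]
      rw [ih r (by simpa using h)]
    · cases r with
      | zero => simp [eastBefore]
      | succ r =>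
        simp only [List.cons_append, eastBefore]
        exact ih r (by simpa using h)

lemma eb_append_eq (w : List Bool) :
    eastBefore (w ++ [true]) (w.count true) = w.count false := by
  induction w with
  | nil => simp [eastBefore]
  | cons b w ih => cases b <;> simp [eastBefore, ih]

lemma eb_le (w : List Bool) (r : ℕ) : eastBefore w r ≤ w.count false := by
  induction w generalizing r with
  | nil => simp [eastBefore]
  | cons b w ih =>
    cases b
    · simpa [eastBefore] using ih r
    · cases r with
      | zero => simp [eastBefore]
      | succ r => simpa [eastBefore] using ih r

lemma eb_mono (w : List Bool) {r s : ℕ} (h : r ≤ s) : eastBefore w r ≤ eastBefore w s := by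
  induction w generalizing r s with
  | nil => simp [eastBefore]
  | cons b w ih =>
    cases b
    · simpa [eastBefore] using ih h
    · rcases r with _ | r
      · simp [eastBefore]
      · rcases s with _ | s
        · omega
        · simpa [eastBefore] using ih (by omega : r ≤ s)

lemma zc_false (w : List Bool) : zc (w ++ [false]) = zc w := by
  unfold zc
  congr 1
  have : (w ++ [false]).count true = w.count true := by simp
  rw [this]
  refine Finset.filter_congr fun i hi => ?_
  rw [eb_append_lt _ _ _ (Finset.mem_range.1 hi)]

lemma zc_true (w : List Bool) :
    zc (w ++ [true]) = zc w + if w.count true < w.count false then 1 else 0 := by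
  unfold zc
  have : (w ++ [true]).count true = w.count true + 1 := by simp
  rw [this, Finset.range_add_one, Finset.filter_insert, eb_append_eq]
  have h2 : (Finset.range (w.count true)).filter (fun i => i < eastBefore (w ++ [true]) i) =
      (Finset.range (w.count true)).filter (fun i => i < eastBefore w i) := by
    refine Finset.filter_congr fun i hi => ?_
    rw [eb_append_lt _ _ _ (Finset.mem_range.1 hi)]
  rw [h2]
  split_ifs with h
  · rw [Finset.card_insert_of_notMem (by simp)]
  · simp

/-- The element determined by a word. -/
def wElem (x y : P) (w : List Bool) : P := (w.map fun b => if b then x else y).prod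

lemma main_form {x y : P} (R : Rels x y) (w : List Bool) : ∃ f : P,
    Good x y (min (w.count true) (w.count false)) (zc w) f ∧
    wElem x y w = f * x ^ (w.count true - w.count false) *
      y ^ (w.count false - w.count true) := by
  induction w using List.reverseRecOn with
  | nil => exact ⟨1, by simpa [zc] using Good.one, by simp [wElem]⟩
  | append_singleton w b ih =>
    obtain ⟨f, hf, hw⟩ := ih
    have hm : wElem x y (w ++ [b]) = wElem x y w * (if b then x else y) := by simp [wElem]
    rw [hm, hw]
    cases b
    · have h1 : (w ++ [false]).count true = w.count true := by simp
      have h2 : (w ++ [false]).count false = w.count false + 1 := by simp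
      rw [h1, h2, zc_false]
      generalize w.count true = m at *
      generalize w.count false = n at *
      rcases lt_or_ge n m with h | h
      · obtain ⟨d, rfl⟩ := Nat.exists_eq_add_of_lt h
        refine ⟨f * Wp x y d, ?_, ?_⟩
        · convert Good.mulWp R hf d using 1
          omega
        · rw [show n + d + 1 - n = d + 1 by omega, show n - (n + d + 1) = 0 by omega,
            show n + d + 1 - (n + 1) = d by omega, show n + 1 - (n + d + 1) = 0 by omega]
          simp only [pow_zero, mul_one, Bool.false_eq_true, if_false]
          rw [mul_assoc, npow_e R, mul_assoc]
      · refine ⟨f, ?_, ?_⟩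
        · convert hf using 1
          omega
        · rw [show m - n = 0 by omega, show m - (n + 1) = 0 by omega,
            show n + 1 - m = n - m + 1 by omega]
          simp [pow_succ, mul_assoc]
    · have h1 : (w ++ [true]).count true = w.count true + 1 := by simp
      have h2 : (w ++ [true]).count false = w.count false := by simp
      rw [h1, h2, zc_true]
      generalize w.count true = m at *
      generalize w.count false = n at *
      rcases lt_or_ge m n with h | h
      · rw [if_pos h]
        obtain ⟨d, rfl⟩ := Nat.exists_eq_add_of_lt h
        refine ⟨f * Wm x y d, ?_, ?_⟩
        · convert Good.mulWm R hf d using 1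
          omega
        · rw [show m + d + 1 - m = d + 1 by omega, show m - (m + d + 1) = 0 by omega,
            show m + d + 1 - (m + 1) = d by omega, show m + 1 - (m + d + 1) = 0 by omega]
          simp only [pow_zero, mul_one, if_true]
          rw [mul_assoc, epow_n R, mul_assoc]
      · rw [if_neg (by omega), add_zero]
        refine ⟨f, ?_, ?_⟩
        · convert hf using 1
          omega
        · rw [show n - m = 0 by omega, show n - (m + 1) = 0 by omega,
            show m + 1 - n = m - n + 1 by omega]
          simp [pow_succ, mul_assoc]

lemma bSeq_iff (m : ℕ) (w : List Bool) (i : ℕ) (hi : 1 ≤ i) (him : i ≤ m) :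
    bSeq m (wordLam m w) i ≤ 0 ↔ i ≤ eastBefore w (i - 1) := by
  have hl : wordLam m w (m - i) = eastBefore w (i - 1) := by
    unfold wordLam
    rw [if_pos (by omega)]
    congr 1
    omega
  unfold bSeq
  rw [hl]
  split_ifs with h
  · have hc : conjP m (wordLam m w) i ≤ m - i := by
      unfold conjP
      refine (Finset.card_le_card (t := Finset.range (m - i)) ?_).trans (by simp)
      intro r hr
      rw [Finset.mem_filter, Finset.mem_range] at hr
      rw [Finset.mem_range]
      by_contra hlt
      have h3 := hr.2
      unfold wordLam at h3
      rw [if_pos hr.1] at h3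
      have := eb_mono w (show m - 1 - r ≤ i - 1 by omega)
      omega
    constructor <;> intro <;> omega
  · constructor <;> intro <;> omega

lemma z_eq (m n : ℕ) (hmn : n ≤ m) (w : List Bool)
    (hn : w.count true = m) (he : w.count false = n) :
    ((Finset.Icc 1 n).filter fun i => bSeq m (wordLam m w) i ≤ 0).card = zc w := by
  unfold zc
  refine (Finset.card_bij (fun i _ => i + 1) ?_ ?_ ?_).symm
  · intro i hi
    rw [Finset.mem_filter, Finset.mem_range] at hi
    have := eb_le w i
    rw [Finset.mem_filter, Finset.mem_Icc, bSeq_iff _ _ _ (by omega) (by omega)]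
    simp only [Nat.add_sub_cancel]
    omega
  · intro a _ b _ h
    omega
  · intro i hi
    rw [Finset.mem_filter, Finset.mem_Icc] at hi
    obtain ⟨⟨h1, h2⟩, h3⟩ := hi
    rw [bSeq_iff _ _ _ h1 (by omega)] at h3
    refine ⟨i - 1, ?_, by omega⟩
    rw [Finset.mem_filter, Finset.mem_range]
    omega

lemma main_path (w : List Bool) : ∃ c : ℕ → F,
    (wordElem w = (∑ r ∈ Finset.range (min (w.count true) (w.count false) + 1),
      c r • ((Pe * Pn) ^ r * (Pn * Pe) ^ (min (w.count true) (w.count false) - r))) *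
      Pn ^ (w.count true - w.count false) * Pe ^ (w.count false - w.count true)) ∧
    ∀ r, LP ((-1) ^ (r + zc w) * c r) := by
  let _ : Ring PathAlg := Algebra.semiringToRing F
  have R : Rels Pn Pe := by
    constructor
    · have := RingQuot.mkAlgHom_rel F PathRel.mod1
      simp only [map_smul, map_add, map_mul] at this
      exact this
    · have := RingQuot.mkAlgHom_rel F PathRel.mod2
      simp only [map_smul, map_add, map_mul] at this
      exact this
  obtain ⟨f, ⟨c, hf, -, hc⟩, hw⟩ := main_form R w
  refine ⟨c, ?_, hc⟩
  rw [hf] at hw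
  exact hw

end PathProof

/-- Expansion in the zigzag basis: globally signed Laurent coefficients. -/
theorem stmt7 (m n : ℕ) (hmn : n ≤ m) (w : List Bool)
    (hn : w.count true = m) (he : w.count false = n) :
    ∃ c : ℕ → F,
      (wordElem w = ∑ r ∈ Finset.range (n + 1),
        c r • ((Pe * Pn) ^ r * (Pn * Pe) ^ (n - r) * Pn ^ (m - n))) ∧
      ∀ r, ∃ (a : ℤ) (p : Polynomial ℕ),
        (-1 : F) ^ (r + ((Finset.Icc 1 n).filter fun i => bSeq m (wordLam m w) i ≤ 0).card) *
          c r = qq ^ a * Polynomial.eval₂ (Nat.castRingHom F) qq p := by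
  rw [z_eq m n hmn w hn he]
  obtain ⟨c, hw, hc⟩ := main_path w
  refine ⟨c, ?_, hc⟩
  rw [hw, hn, he, min_eq_right hmn, Nat.sub_eq_zero_of_le hmn, pow_zero, mul_one, Finset.sum_mul]
  simp only [smul_mul_assoc]
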